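/- Let h = 2^d with d ∈ ℕ and w ≥ 2. There exists a binary-union straight-line program computing the FHT pattern set H_{h,w} with at most w·h·log₂(h) = w·d·2^d steps, in which moreover every union taken is a union of two disjoint sets (so the same program computes all the sums Σ_{p∈T} p, T ∈ H_{h,w}, using at most w·h·log₂(h) binary additions). -/

import Mathlib

/-!
FHT patterns. Pixels are pairs `(i, j) : ℕ × ℕ` (row `i`, column `j`).
-/

/-- Width-cyclic translation `tran_{a,b}`: shift rows up by `a` and columns by `b`
cyclically modulo the image width `w`. -/
def tran (w a b : ℕ) (T : Finset (ℕ × ℕ)) : Finset (ℕ × ℕ) :=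
  T.image fun p => (p.1 + a, (p.2 + b) % w)

/-- The column of the (unique, for FHT patterns) pixel of `T` in row `i`. -/
def colAt (T : Finset (ℕ × ℕ)) (i : ℕ) : ℕ :=
  ((T.filter fun p => p.1 = i).image Prod.snd).sup id

/-- Horizontal span `Δ(T) = (j_top - j_bot) mod w` of a pattern of height `h`. -/
def span (w h : ℕ) (T : Finset (ℕ × ℕ)) : ℕ :=
  (colAt T (h - 1) + w - colAt T 0) % w

/-- The FHT pattern sets `H_k` (mostly vertical, inclined to the right) at image width `w`:
`H_0` consists of the single bottom pixels, and `H_{k}` is obtained by stacking a translated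
copy of each `T ∈ H_{k-1}` on top of itself, with horizontal shift `Δ(T) + s`, `s ∈ {0, 1}`.
`H_{h,w}` for `h = 2 ^ d` is `FHT w d`. -/
def FHT (w : ℕ) : ℕ → Finset (Finset (ℕ × ℕ))
  | 0 => (Finset.range w).image fun j => ({(0, j)} : Finset (ℕ × ℕ))
  | k + 1 =>
      ((FHT w k) ×ˢ ({0, 1} : Finset ℕ)).image
        fun q => q.1 ∪ tran w (2 ^ k) (span w (2 ^ k) q.1 + q.2) q.1

/-- An admissible operand of step `t` of a binary-union straight-line program
`s : Fin g → Finset α`: a singleton pixel or some earlier step. -/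
def IsOperand {α : Type*} {g : ℕ} (s : Fin g → Finset α) (t : Fin g) (A : Finset α) : Prop :=
  (∃ p, A = {p}) ∨ ∃ u, u < t ∧ A = s u

/-- `s` is a binary-union straight-line program: each step is the union of two admissible
operands. -/
def ValidProg {α : Type*} [DecidableEq α] {g : ℕ} (s : Fin g → Finset α) : Prop :=
  ∀ t, ∃ A B, IsOperand s t A ∧ IsOperand s t B ∧ s t = A ∪ B

/-- The program `s` computes the pattern family `𝒯`: every pattern of `𝒯` is a singleton
or appears among the steps of `s`. -/
def Computes {α : Type*} {g : ℕ} (s : Fin g → Finset α) (𝒯 : Finset (Finset α)) : Prop :=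
  ∀ T ∈ 𝒯, (∃ p, T = {p}) ∨ ∃ t, s t = T

/-- `OR2 𝒯` is the minimal number of steps (binary gates) over all binary-union
straight-line programs computing `𝒯`. -/
noncomputable def OR2 {α : Type*} [DecidableEq α] (𝒯 : Finset (Finset α)) : ℕ :=
  sInf {g | ∃ s : Fin g → Finset α, ValidProg s ∧ Computes s 𝒯}

/-- A disjoint-union program with at most `n` steps computing all of `S`. -/
def DProg (n : ℕ) (S : Finset (Finset (ℕ × ℕ))) : Prop :=
  ∃ g ≤ n, ∃ s : Fin g → Finset (ℕ × ℕ),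
      (∀ t, ∃ A B, IsOperand s t A ∧ IsOperand s t B ∧ Disjoint A B ∧ s t = A ∪ B) ∧
      Computes s S

theorem DProg.step {n : ℕ} {S : Finset (Finset (ℕ × ℕ))} (h : DProg n S)
    (A B : Finset (ℕ × ℕ)) (hA : (∃ p, A = {p}) ∨ A ∈ S) (hB : (∃ p, B = {p}) ∨ B ∈ S)
    (hd : Disjoint A B) : DProg (n + 1) (insert (A ∪ B) S) := by
  obtain ⟨g, hg, s, hs, hc⟩ := h
  refine ⟨g + 1, by omega, Fin.snoc (α := fun _ => Finset (ℕ × ℕ)) s (A ∪ B), ?_, ?_⟩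
  · intro t
    refine Fin.lastCases ?_ (fun t => ?_) t
    · have key : ∀ C : Finset (ℕ × ℕ), ((∃ p, C = {p}) ∨ C ∈ S) →
          IsOperand (Fin.snoc (α := fun _ => Finset (ℕ × ℕ)) s (A ∪ B)) (Fin.last g) C := by
        intro C hC
        have : (∃ p, C = {p}) ∨ ∃ t, s t = C := by
          rcases hC with hC | hC
          · exact Or.inl hC
          · exact hc C hC
        rcases this with h1 | ⟨u, hu⟩
        · exact Or.inl h1
        · exact Or.inr ⟨u.castSucc, Fin.castSucc_lt_last u, by simp [hu]⟩
      exact ⟨A, B, key A hA, key B hB, hd, by simp⟩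
    · obtain ⟨C, D, h1, h2, h3, h4⟩ := hs t
      have key : ∀ E : Finset (ℕ × ℕ), IsOperand s t E →
          IsOperand (Fin.snoc (α := fun _ => Finset (ℕ × ℕ)) s (A ∪ B)) t.castSucc E := by
        intro E hE
        rcases hE with h1 | ⟨u, hu, hu'⟩
        · exact Or.inl h1
        · exact Or.inr ⟨u.castSucc, by simpa using hu, by simp [hu']⟩
      exact ⟨C, D, key C h1, key D h2, h3, by simp [h4]⟩
  · intro T hT
    rcases Finset.mem_insert.1 hT with rfl | hT
    · exact Or.inr ⟨Fin.last g, by simp⟩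
    · rcases hc T hT with h1 | ⟨u, hu⟩
      · exact Or.inl h1
      · exact Or.inr ⟨u.castSucc, by simp [hu]⟩

theorem DProg.steps {n : ℕ} {S : Finset (Finset (ℕ × ℕ))} (h : DProg n S)
    (L : Finset (Finset (ℕ × ℕ)))
    (hL : ∀ U ∈ L, ∃ A B, ((∃ p, A = {p}) ∨ A ∈ S) ∧ ((∃ p, B = {p}) ∨ B ∈ S) ∧
      Disjoint A B ∧ U = A ∪ B) : DProg (n + L.card) (L ∪ S) := by
  classical
  induction L using Finset.induction_on with
  | empty => simpa using h
  | insert U L hU ih =>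
    have ih' := ih (fun V hV => hL V (Finset.mem_insert_of_mem hV))
    obtain ⟨A, B, hA, hB, hd, rfl⟩ := hL U (Finset.mem_insert_self _ _)
    rw [Finset.card_insert_of_notMem hU, Finset.insert_union, ← add_assoc]
    refine ih'.step A B ?_ ?_ hd
    · exact hA.imp id (fun h => Finset.mem_union_right _ h)
    · exact hB.imp id (fun h => Finset.mem_union_right _ h)

theorem DProg.mono {n m : ℕ} {S S' : Finset (Finset (ℕ × ℕ))} (h : DProg n S) (hnm : n ≤ m)
    (hS : S' ⊆ S) : DProg m S' := by
  obtain ⟨g, hg, s, hs, hc⟩ := h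
  exact ⟨g, hg.trans hnm, s, hs, fun T hT => hc T (hS hT)⟩

theorem tran_tran (w a b a' b' : ℕ) (T : Finset (ℕ × ℕ)) :
    tran w a b (tran w a' b' T) = tran w (a' + a) (b' + b) T := by
  unfold tran
  rw [Finset.image_image]
  congr 1
  funext p
  simp [Nat.mod_add_mod, add_assoc]

theorem tran_union (w a b : ℕ) (S T : Finset (ℕ × ℕ)) :
    tran w a b (S ∪ T) = tran w a b S ∪ tran w a b T := Finset.image_union _ _

/-- Graph of a column function over the first `n` rows. -/
def graphPat (n : ℕ) (f : ℕ → ℕ) : Finset (ℕ × ℕ) :=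
  (Finset.range n).image fun i => (i, f i)

theorem colAt_graphPat (n : ℕ) (f : ℕ → ℕ) (i : ℕ) (hi : i < n) :
    colAt (graphPat n f) i = f i := by
  have : ((graphPat n f).filter fun p => p.1 = i).image Prod.snd = {f i} := by
    ext x
    simp only [graphPat, Finset.mem_image, Finset.mem_filter, Finset.mem_range,
      Finset.mem_singleton]
    constructor
    · rintro ⟨p, ⟨⟨j, hj, rfl⟩, h⟩, rfl⟩
      simp at h
      simp [h]
    · rintro rfl
      exact ⟨(i, f i), ⟨⟨i, hi, rfl⟩, rfl⟩, rfl⟩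
  simp [colAt, this]

theorem tran_graphPat (w b n : ℕ) (f : ℕ → ℕ) :
    tran w 0 b (graphPat n f) = graphPat n (fun i => (f i + b) % w) := by
  simp [tran, graphPat, Finset.image_image, Function.comp_def]

theorem FHT_graph (w : ℕ) (hw : 0 < w) (k : ℕ) : ∀ T ∈ FHT w k,
    ∃ f : ℕ → ℕ, (∀ i, f i < w) ∧ T = graphPat (2 ^ k) f := by
  induction k with
  | zero =>
    intro T hT
    simp only [FHT, Finset.mem_image, Finset.mem_range] at hT
    obtain ⟨j, hj, rfl⟩ := hT
    exact ⟨fun _ => j, fun _ => hj, by simp [graphPat]⟩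
  | succ k ih =>
    intro T hT
    simp only [FHT, Finset.mem_image, Finset.mem_product] at hT
    obtain ⟨⟨T, s⟩, ⟨hT, -⟩, rfl⟩ := hT
    obtain ⟨f, hf, rfl⟩ := ih T hT
    simp only
    generalize span w (2 ^ k) (graphPat (2 ^ k) f) + s = c
    refine ⟨fun i => if i < 2 ^ k then f i else (f (i - 2 ^ k) + c) % w, ?_, ?_⟩
    · intro i
      dsimp only
      split_ifs
      · exact hf i
      · exact Nat.mod_lt _ hw
    · ext ⟨x, y⟩
      simp only [graphPat, tran, Finset.mem_union, Finset.mem_image, Finset.mem_range,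
        Prod.mk.injEq, pow_succ]
      constructor
      · rintro (⟨i, hi, rfl, rfl⟩ | ⟨_, ⟨i, hi, rfl⟩, rfl, rfl⟩)
        · exact ⟨i, by omega, rfl, by simp [hi]⟩
        · exact ⟨i + 2 ^ k, by omega, rfl, by simp⟩
      · rintro ⟨i, hi, rfl, rfl⟩
        by_cases h : i < 2 ^ k
        · left
          exact ⟨i, h, rfl, by simp [h]⟩
        · right
          exact ⟨(i - 2 ^ k, f (i - 2 ^ k)), ⟨_, by omega, rfl⟩, by dsimp only; omega,
            by simp [h]⟩

theorem mod_shift (w b x y : ℕ) (hx : x < w) (hy : y < w) :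
    ((x + b) % w + w - (y + b) % w) % w = (x + w - y) % w := by
  have hw : 0 < w := by omega
  have h1 := Nat.mod_lt (y + b) hw
  have : ((x + b) % w + w - (y + b) % w) ≡ (x + w - y) [MOD w] := by
    apply Nat.ModEq.add_right_cancel' (y + b)
    have e1 : ((x + b) % w + w - (y + b) % w) + (y + b) ≡
        ((x + b) % w + w - (y + b) % w) + (y + b) % w [MOD w] :=
      Nat.ModEq.add_left _ (Nat.mod_modEq _ _).symm
    have e2 : ((x + b) % w + w - (y + b) % w) + (y + b) % w = (x + b) % w + w := by omega
    have e3 : (x + w - y) + (y + b) = (x + b) + w := by omega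
    rw [e3]
    rw [e2] at e1
    exact e1.trans (Nat.ModEq.add_right _ (Nat.mod_modEq _ _))
  exact this

theorem span_tran (w k b : ℕ) (hw : 0 < w) (T : Finset (ℕ × ℕ)) (hT : T ∈ FHT w k) :
    span w (2 ^ k) (tran w 0 b T) = span w (2 ^ k) T := by
  obtain ⟨f, hf, rfl⟩ := FHT_graph w hw k T hT
  have h0 : 0 < 2 ^ k := by positivity
  rw [tran_graphPat]
  unfold span
  rw [colAt_graphPat _ _ _ (by omega), colAt_graphPat _ _ _ h0,
    colAt_graphPat _ _ _ (by omega), colAt_graphPat _ _ _ h0]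
  exact mod_shift _ _ _ _ (hf _) (hf _)

theorem tran_mem (w b : ℕ) (hw : 0 < w) (k : ℕ) : ∀ T ∈ FHT w k, tran w 0 b T ∈ FHT w k := by
  induction k with
  | zero =>
    intro T hT
    simp only [FHT, Finset.mem_image, Finset.mem_range] at hT ⊢
    obtain ⟨j, hj, rfl⟩ := hT
    exact ⟨(j + b) % w, Nat.mod_lt _ hw, by simp [tran]⟩
  | succ k ih =>
    intro T hT
    simp only [FHT, Finset.mem_image, Finset.mem_product] at hT ⊢
    obtain ⟨⟨T, s⟩, ⟨hT, hs⟩, rfl⟩ := hT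
    refine ⟨(tran w 0 b T, s), ⟨ih T hT, hs⟩, ?_⟩
    simp only [tran_union, tran_tran, span_tran w k b hw T hT]
    congr 2 <;> ring

theorem tran_zero (w : ℕ) (hw : 0 < w) (k : ℕ) (T : Finset (ℕ × ℕ)) (hT : T ∈ FHT w k) :
    tran w 0 0 T = T := by
  obtain ⟨f, hf, rfl⟩ := FHT_graph w hw k T hT
  rw [tran_graphPat]
  congr 1
  funext i
  simpa using Nat.mod_eq_of_lt (hf i)

theorem FHT_card (w k : ℕ) : (FHT w k).card ≤ w * 2 ^ k := by
  induction k with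
  | zero =>
    simp only [FHT]
    exact Finset.card_image_le.trans (by simp)
  | succ k ih =>
    simp only [FHT]
    refine Finset.card_image_le.trans ?_
    rw [Finset.card_product]
    have : ({0, 1} : Finset ℕ).card = 2 := rfl
    rw [this, pow_succ, ← mul_assoc]
    exact Nat.mul_le_mul_right _ ih

/-- All vertical translates of `H_k` to blocks of height `2 ^ k`. -/
def level (w d k : ℕ) : Finset (Finset (ℕ × ℕ)) :=
  ((FHT w k) ×ˢ Finset.range (2 ^ (d - k))).image fun q => tran w (2 ^ k * q.2) 0 q.1

theorem level_card (w d k : ℕ) (hk : k ≤ d) : (level w d k).card ≤ w * 2 ^ d := by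
  refine Finset.card_image_le.trans ?_
  rw [Finset.card_product, Finset.card_range]
  calc _ ≤ w * 2 ^ k * 2 ^ (d - k) := Nat.mul_le_mul_right _ (FHT_card w k)
    _ = w * 2 ^ d := by rw [mul_assoc, ← pow_add, Nat.add_sub_cancel' hk]

theorem tran_rows (w k a b : ℕ) (hw : 0 < w) (T : Finset (ℕ × ℕ)) (hT : T ∈ FHT w k)
    (p : ℕ × ℕ) (hp : p ∈ tran w a b T) : a ≤ p.1 ∧ p.1 < a + 2 ^ k := by
  obtain ⟨f, hf, rfl⟩ := FHT_graph w hw k T hT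
  simp only [tran, graphPat, Finset.mem_image, Finset.mem_range] at hp
  obtain ⟨_, ⟨i, hi, rfl⟩, rfl⟩ := hp
  dsimp only
  omega

theorem level_prog (w d : ℕ) (hw : 0 < w) (k : ℕ) (hk : k ≤ d) :
    DProg (w * k * 2 ^ d) (level w d k) := by
  induction k with
  | zero =>
    refine ⟨0, by simp, fun t => t.elim0, fun t => t.elim0, ?_⟩
    intro T hT
    left
    simp only [level, FHT, Finset.mem_image, Finset.mem_product, Finset.mem_range] at hT
    obtain ⟨⟨T, m⟩, ⟨⟨j, hj, rfl⟩, hm⟩, rfl⟩ := hT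
    exact ⟨(0 + 2 ^ 0 * m, (j + 0) % w), by simp only [tran, Finset.image_singleton]⟩
  | succ k ih =>
    have h := ih (by omega)
    refine (h.steps (level w d (k + 1)) ?_).mono ?_ Finset.subset_union_left
    · intro U hU
      simp only [level, FHT, Finset.mem_image, Finset.mem_product, Finset.mem_range] at hU
      obtain ⟨⟨T, m⟩, ⟨⟨⟨T, s⟩, ⟨hT, hs⟩, rfl⟩, hm⟩, rfl⟩ := hU
      simp only at hT hs hm ⊢
      generalize span w (2 ^ k) T + s = c
      have hpow : 2 ^ (d - k) = 2 * 2 ^ (d - (k + 1)) := by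
        rw [← pow_succ']
        congr 1
        omega
      refine ⟨tran w (2 ^ k * (2 * m)) 0 T, tran w (2 ^ k * (2 * m + 1)) 0 (tran w 0 c T),
        Or.inr ?_, Or.inr ?_, ?_, ?_⟩
      · exact Finset.mem_image.2 ⟨(T, 2 * m), Finset.mem_product.2
          ⟨hT, Finset.mem_range.2 (by dsimp only; omega)⟩, rfl⟩
      · exact Finset.mem_image.2 ⟨(tran w 0 c T, 2 * m + 1), Finset.mem_product.2
          ⟨tran_mem w c hw k T hT, Finset.mem_range.2 (by dsimp only; omega)⟩, rfl⟩
      · rw [Finset.disjoint_left]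
        intro p hp hp'
        have h1 := tran_rows w k _ _ hw T hT p hp
        have h2 := tran_rows w k _ _ hw _ (tran_mem w c hw k T hT) p hp'
        rw [mul_add] at h2
        omega
      · rw [tran_union, tran_tran, tran_tran]
        congr 2 <;> ring
    · have := level_card w d (k + 1) hk
      calc _ ≤ w * k * 2 ^ d + w * 2 ^ d := by omega
        _ = _ := by ring

/-- For `h = 2 ^ d` and `w ≥ 2` there is a binary-union straight-line program computing the
FHT pattern set `H_{h,w}` with at most `w · h · log₂ h = w · d · 2 ^ d` steps, in which
moreover every union taken is a union of two disjoint sets (so the same program computes all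
the sums `Σ_{p ∈ T} p`, `T ∈ H_{h,w}`, using at most `w · h · log₂ h` binary additions). -/
theorem fht_algorithm (w d : ℕ) (hw : 2 ≤ w) :
    ∃ g ≤ w * d * 2 ^ d, ∃ s : Fin g → Finset (ℕ × ℕ),
      (∀ t, ∃ A B, IsOperand s t A ∧ IsOperand s t B ∧ Disjoint A B ∧ s t = A ∪ B) ∧
      Computes s (FHT w d) := by
  have hw0 : 0 < w := by omega
  refine (level_prog w d hw0 d le_rfl).mono le_rfl ?_
  intro T hT
  exact Finset.mem_image.2 ⟨(T, 0), Finset.mem_product.2 ⟨hT, by simp⟩,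
    by simpa using tran_zero w hw0 d T hT⟩
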